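/- Newton–Puiseux factorization (Theorem puiseux-thm): let f be a monic irreducible polynomial over LaurentSeries ℂ of degree d ≥ 1, and let ζ ∈ ℂ be a primitive d-th root of unity. Then there exist pairwise distinct φ₀, …, φ_{d−1} ∈ HahnSeries ℚ ℂ, each with support in (1/d)ℤ, satisfying (φ_j).coeff(m/d) = ζ^{j·m} · (φ₀).coeff(m/d) for all 0 ≤ j ≤ d−1 and all integers m, such that the image of f in (HahnSeries ℚ ℂ)[X] under coefficientwise application of ι equals ∏_{j=0}^{d−1} (X − C φ_j). -/

import Mathlib

/-!
The existence of a Puiseux root is proved by induction on the degree. A translation removes the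
subleading coefficient (characteristic zero). Dividing out the smallest slope of the Newton polygon,
after a ramified substitution `u ↦ u ^ q` which makes that slope an integer, gives a polynomial over
`ℂ⟦u⟧` whose reduction modulo `u` is not `X ^ n` and has no `X ^ (n - 1)` term, hence is not a power
of a linear polynomial. A root of the reduction thus has multiplicity `m` with `0 < m < n`, and
Weierstrass preparation (`exists_monic_dvd`) splits off a monic factor of degree `m`.

For irreducible `f`, let `r` be minimal such that `f` has a root in `ℂ((u ^ (1/r)))`. All series in
`u ^ (1/r)` are handled inside `ℂ((u))` by means of the endomorphism `u ↦ u ^ r` (`ram`). By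
minimality of `r` the root is not a series in a proper power of `u`, so its images under
`u ↦ ξ u` (`twist`), with `ξ` ranging over the `r`-th roots of unity, are distinct. The product of
the corresponding linear factors divides `f` and is invariant under the twists, so it has coefficients
in the base field and equals `f` by irreducibility (`map_ram_eq_prod`). Comparing degrees, `r = d`.
-/

noncomputable section

/-- The embedding `ℂ((u)) → HahnSeries ℚ ℂ` induced by the inclusion `ℤ → ℚ`. -/
def iota : LaurentSeries ℂ →+* HahnSeries ℚ ℂ :=
  HahnSeries.embDomainRingHom (Int.castAddHom ℚ)
    (fun _ _ h => by simpa using h)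
    (fun _ _ => by simp)

/-- A Puiseux series `φ` has support in `(1/r)ℤ` if every exponent in its support
equals `m/r` for some integer `m`. -/
def SuppInDiv (r : ℕ) (φ : HahnSeries ℚ ℂ) : Prop :=
  ∀ q ∈ φ.support, ∃ m : ℤ, q = (m : ℚ) / r


namespace NewtonPuiseux

open Polynomial

/-! ### Factoring over formal power series -/

instance : IsAdicComplete (IsLocalRing.maximalIdeal (PowerSeries ℂ)) (PowerSeries ℂ) := by
  rw [PowerSeries.maximalIdeal_eq_span_X]; infer_instance

/-- If the reduction of `G` modulo the maximal ideal of `ℂ⟦u⟧` vanishes at `0` to order exactly `m`,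
then `G` has a monic factor of degree `m`. The factor is the distinguished polynomial of the
Weierstrass preparation of `G`; uniqueness of Weierstrass division shows that it divides `G` already
as a polynomial. -/
theorem exists_monic_dvd (G : (PowerSeries ℂ)[X]) (m : ℕ)
    (hlt : ∀ i < m, PowerSeries.constantCoeff (G.coeff i) = 0)
    (hm : PowerSeries.constantCoeff (G.coeff m) ≠ 0) :
    ∃ g : (PowerSeries ℂ)[X], g.Monic ∧ g.natDegree = m ∧ g ∣ G := by
  have key : ∀ a : PowerSeries ℂ, IsLocalRing.residue (PowerSeries ℂ) a = 0 ↔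
      PowerSeries.constantCoeff a = 0 := fun a => by
    rw [IsLocalRing.residue_eq_zero_iff, PowerSeries.maximalIdeal_eq_span_X,
      Ideal.mem_span_singleton, PowerSeries.X_dvd_iff]
  have hord : (PowerSeries.map (IsLocalRing.residue (PowerSeries ℂ))
      (G : PowerSeries (PowerSeries ℂ))).order = m := by
    rw [PowerSeries.order_eq_nat]
    refine ⟨?_, fun i hi => ?_⟩
    · rw [PowerSeries.coeff_map, Polynomial.coeff_coe, ne_eq, key]
      exact hm
    · rw [PowerSeries.coeff_map, Polynomial.coeff_coe, key]
      exact hlt i hi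
  have hne : PowerSeries.map (IsLocalRing.residue (PowerSeries ℂ))
      (G : PowerSeries (PowerSeries ℂ)) ≠ 0 := by
    intro h
    rw [h, PowerSeries.order_zero] at hord
    exact ENat.top_ne_natCast m hord
  obtain ⟨g, h, H⟩ := PowerSeries.exists_isWeierstrassFactorization hne
  have hg : g.Monic := H.isDistinguishedAt.monic
  refine ⟨g, hg, by rw [H.natDegree_eq_toNat_order_map, hord, ENat.toNat_natCast], ?_⟩
  have hI : IsLocalRing.maximalIdeal (PowerSeries ℂ) ≠ ⊤ := Ideal.IsPrime.ne_top'
  have hW := H.isDistinguishedAt.isWeierstrassDivisorAt hI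
  have hdeg : (G %ₘ g).degree < (PowerSeries.map (Ideal.Quotient.mk
      (IsLocalRing.maximalIdeal (PowerSeries ℂ))) (g : PowerSeries (PowerSeries ℂ))).order.toNat := by
    have h1 := congr(ENat.toNat $(H.isDistinguishedAt.coe_natDegree_eq_order_map g 1
      (by rwa [PowerSeries.constantCoeff_one, ← Ideal.ne_top_iff_one]) (by simp)))
    rw [← h1, ENat.toNat_natCast, ← Polynomial.degree_eq_natDegree hg.ne_zero]
    exact Polynomial.degree_modByMonic_lt _ hg
  -- Both `G = g * h` and `G = g * (G /ₘ g) + G %ₘ g` are Weierstrass divisions of `G` by `g`.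
  have hz := (hW.eq_zero_of_mul_eq (q := h - ((G /ₘ g : (PowerSeries ℂ)[X]) :
      PowerSeries (PowerSeries ℂ))) hdeg (by
    have h1 : (G : PowerSeries (PowerSeries ℂ)) = ((G %ₘ g + g * (G /ₘ g) : (PowerSeries ℂ)[X]) :
      PowerSeries (PowerSeries ℂ)) := by rw [Polynomial.modByMonic_add_div]
    rw [H.eq_mul, Polynomial.coe_add, Polynomial.coe_mul] at h1
    rw [mul_sub, h1]; ring)).2
  exact (Polynomial.modByMonic_eq_zero_iff_dvd hg).1 hz

/-! ### Ramified substitutions and twists -/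

/-- The substitution `u ↦ u ^ r` on `ℂ((u))`. -/
def ram (r : ℕ) (hr : 0 < r) : LaurentSeries ℂ →+* LaurentSeries ℂ :=
  HahnSeries.embDomainRingHom (AddMonoidHom.mulLeft (r : ℤ))
    (fun a b h => by
      have : r ≠ 0 := hr.ne'
      simpa [this] using h)
    (fun a b => by
      have : (0 : ℤ) < r := by positivity
      exact mul_le_mul_iff_right₀ this)

theorem ram_coeff (r : ℕ) (hr : 0 < r) (x : LaurentSeries ℂ) (m : ℤ) :
    (ram r hr x).coeff (r * m) = x.coeff m :=
  HahnSeries.embDomain_coeff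

theorem ram_coeff_eq_zero (r : ℕ) (hr : 0 < r) (x : LaurentSeries ℂ) (m : ℤ)
    (hm : ¬ (r : ℤ) ∣ m) : (ram r hr x).coeff m = 0 :=
  HahnSeries.embDomain_of_notMem_range (by
    rintro ⟨k, hk⟩
    exact hm ⟨k, hk.symm⟩)

theorem ram_ram (r q : ℕ) (hr : 0 < r) (hq : 0 < q) (x : LaurentSeries ℂ) :
    ram r hr (ram q hq x) = ram (r * q) (Nat.mul_pos hr hq) x := by
  ext m
  by_cases h : (r : ℤ) ∣ m
  · obtain ⟨k, rfl⟩ := h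
    rw [ram_coeff]
    by_cases h' : (q : ℤ) ∣ k
    · obtain ⟨l, rfl⟩ := h'
      rw [ram_coeff, ← mul_assoc, ← Nat.cast_mul, ram_coeff]
    · rw [ram_coeff_eq_zero _ _ _ _ h', ram_coeff_eq_zero]
      rw [Nat.cast_mul]
      intro h2
      exact h' ((mul_dvd_mul_iff_left (by positivity)).1 h2)
  · rw [ram_coeff_eq_zero _ _ _ _ h, ram_coeff_eq_zero]
    intro h2
    exact h ((Dvd.intro _ (Nat.cast_mul r q).symm).trans h2)

/-- A Laurent series supported on `rℤ` is a series in `u ^ r`. -/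
theorem exists_ram_eq (r : ℕ) (hr : 0 < r) (x : LaurentSeries ℂ)
    (hx : ∀ m : ℤ, x.coeff m ≠ 0 → (r : ℤ) ∣ m) : ∃ y, ram r hr y = x := by
  refine ⟨HahnSeries.ofSuppBddBelow (fun m => x.coeff (r * m)) ?_, ?_⟩
  · refine ⟨min x.order 0, fun m hm => ?_⟩
    have h1 : x.order ≤ r * m := HahnSeries.order_le_of_coeff_ne_zero hm
    by_contra! h2
    have h3 : m < x.order := h2.trans_le (min_le_left _ _)
    have h4 : m < 0 := h2.trans_le (min_le_right _ _)
    have h5 : (1 : ℤ) ≤ r := by exact_mod_cast hr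
    nlinarith
  · ext m
    by_cases h : (r : ℤ) ∣ m
    · obtain ⟨k, rfl⟩ := h
      rw [ram_coeff]
      rfl
    · rw [ram_coeff_eq_zero _ _ _ _ h]
      by_contra h2
      exact h (hx m (Ne.symm h2))

/-- The automorphism `u ↦ c u` of `ℂ((u))`, for `c ≠ 0`. -/
def twist (c : ℂ) (hc : c ≠ 0) : LaurentSeries ℂ →+* LaurentSeries ℂ where
  toFun x := ⟨fun m => c ^ m * x.coeff m, x.isPWO_support.mono fun m hm => right_ne_zero_of_mul hm⟩
  map_one' := by
    ext m
    by_cases h : m = 0 <;> simp [HahnSeries.coeff_one, h]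
  map_zero' := by ext m; simp
  map_add' x y := by ext m; simp [mul_add]
  map_mul' x y := by
    ext m
    simp only [HahnSeries.coeff_mul, Finset.mul_sum]
    refine Finset.sum_congr ?_ ?_
    · ext ⟨i, j⟩
      simp [hc, zpow_ne_zero]
    · rintro ⟨i, j⟩ hij
      have h : i + j = m := by simp at hij; exact hij.2.2
      simp only
      rw [← h, zpow_add₀ hc]
      ring

@[simp] theorem twist_coeff (c : ℂ) (hc : c ≠ 0) (x : LaurentSeries ℂ) (m : ℤ) :
    (twist c hc x).coeff m = c ^ m * x.coeff m := rfl

theorem twist_ram (r : ℕ) (hr : 0 < r) (c : ℂ) (hc : c ≠ 0) (h1 : c ^ r = 1)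
    (x : LaurentSeries ℂ) : twist c hc (ram r hr x) = ram r hr x := by
  ext m
  rw [twist_coeff]
  by_cases h : (r : ℤ) ∣ m
  · obtain ⟨k, rfl⟩ := h
    rw [zpow_mul, zpow_natCast, h1, one_zpow, one_mul]
  · rw [ram_coeff_eq_zero _ _ _ _ h, mul_zero]

/-- The embedding `ℂ((u)) → HahnSeries ℚ ℂ` sending `u` to `u ^ (1/r)`. -/
def rootEmb (r : ℕ) (hr : 0 < r) : LaurentSeries ℂ →+* HahnSeries ℚ ℂ :=
  HahnSeries.embDomainRingHom ((AddMonoidHom.mulRight ((r : ℚ)⁻¹)).comp (Int.castAddHom ℚ))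
    (fun a b h => by
      have : (r : ℚ) ≠ 0 := by positivity
      simpa [this] using h)
    (fun a b => by
      have : (0 : ℚ) < (r : ℚ)⁻¹ := by positivity
      simp [this])

theorem rootEmb_coeff (r : ℕ) (hr : 0 < r) (x : LaurentSeries ℂ) (m : ℤ) :
    (rootEmb r hr x).coeff ((m : ℚ) / r) = x.coeff m :=
  HahnSeries.embDomain_coeff

theorem rootEmb_coeff_eq_zero (r : ℕ) (hr : 0 < r) (x : LaurentSeries ℂ) (q : ℚ)
    (hq : ∀ m : ℤ, q ≠ (m : ℚ) / r) : (rootEmb r hr x).coeff q = 0 :=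
  HahnSeries.embDomain_of_notMem_range (by
    rintro ⟨k, hk⟩
    exact hq k hk.symm)

theorem suppInDiv_rootEmb (r : ℕ) (hr : 0 < r) (x : LaurentSeries ℂ) :
    SuppInDiv r (rootEmb r hr x) := by
  intro q hq
  by_contra! h
  exact hq (rootEmb_coeff_eq_zero r hr x q h)

theorem iota_coeff (x : LaurentSeries ℂ) (m : ℤ) : (iota x).coeff (m : ℚ) = x.coeff m :=
  HahnSeries.embDomain_coeff

theorem iota_coeff_eq_zero (x : LaurentSeries ℂ) (q : ℚ)
    (hq : ∀ m : ℤ, q ≠ (m : ℚ)) : (iota x).coeff q = 0 :=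
  HahnSeries.embDomain_of_notMem_range (by
    rintro ⟨k, hk⟩
    exact hq k hk.symm)

theorem rootEmb_comp_ram (r : ℕ) (hr : 0 < r) : (rootEmb r hr).comp (ram r hr) = iota := by
  have hr' : (r : ℚ) ≠ 0 := by positivity
  ext x q
  rw [RingHom.comp_apply]
  by_cases h : ∃ k : ℤ, q = k
  · obtain ⟨k, rfl⟩ := h
    have : (k : ℚ) = ((r * k : ℤ) : ℚ) / r := by push_cast; field_simp
    rw [iota_coeff]
    conv_lhs => rw [this]
    rw [rootEmb_coeff, ram_coeff]
  · push Not at h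
    rw [iota_coeff_eq_zero _ _ h]
    by_cases h' : ∃ m : ℤ, q = (m : ℚ) / r
    · obtain ⟨m, rfl⟩ := h'
      rw [rootEmb_coeff, ram_coeff_eq_zero]
      rintro ⟨k, rfl⟩
      exact h k (by push_cast; field_simp)
    · push Not at h'
      exact rootEmb_coeff_eq_zero _ _ _ _ h'

/-! ### Existence of a root after ramification -/

/-- `f` acquires a root in `ℂ((u))` after some ramified substitution `u ↦ u ^ r` in its
coefficients; equivalently, `f` has a root in `ℂ((u ^ (1/r)))`. -/
def HasRoot (f : (LaurentSeries ℂ)[X]) : Prop :=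
  ∃ (r : ℕ) (hr : 0 < r) (y : LaurentSeries ℂ), f.eval₂ (ram r hr) y = 0

theorem HasRoot.of_dvd {f g : (LaurentSeries ℂ)[X]} (h : g ∣ f) (hg : HasRoot g) :
    HasRoot f := by
  obtain ⟨r, hr, y, hy⟩ := hg
  exact ⟨r, hr, y, Polynomial.eval₂_eq_zero_of_dvd_of_eval₂_eq_zero _ _ h hy⟩

theorem HasRoot.of_taylor {f : (LaurentSeries ℂ)[X]} (c : LaurentSeries ℂ)
    (h : HasRoot (taylor c f)) : HasRoot f := by
  obtain ⟨r, hr, y, hy⟩ := h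
  rw [taylor_apply, eval₂_comp] at hy
  exact ⟨r, hr, _, hy⟩

theorem HasRoot.of_map {f : (LaurentSeries ℂ)[X]} (q : ℕ) (hq : 0 < q)
    (h : HasRoot (f.map (ram q hq))) : HasRoot f := by
  obtain ⟨r, hr, y, hy⟩ := h
  refine ⟨r * q, Nat.mul_pos hr hq, y, ?_⟩
  rw [eval₂_map] at hy
  rw [← hy]
  congr 1
  ext1 x
  exact (ram_ram r q hr hq x).symm

theorem HasRoot.of_scaleRoots {f : (LaurentSeries ℂ)[X]} (s : LaurentSeries ℂ) (hs : s ≠ 0)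
    (h : HasRoot (f.scaleRoots s)) : HasRoot f := by
  obtain ⟨r, hr, y, hy⟩ := h
  have hs' : ram r hr s ≠ 0 := (_root_.map_ne_zero _).2 hs
  refine ⟨r, hr, y / ram r hr s, ?_⟩
  have h1 := scaleRoots_eval₂_mul (p := f) (ram r hr) (y / ram r hr s) s
  rw [mul_div_cancel₀ _ hs', hy] at h1
  exact (mul_eq_zero.1 h1.symm).resolve_left (pow_ne_zero _ hs')

/-- The effect of a translation on the subleading coefficient of a monic polynomial. -/
theorem taylor_coeff_pred {R : Type*} [CommRing R] (f : R[X]) (n : ℕ) (hf : f.Monic)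
    (hn : f.natDegree = n + 1) (c : R) :
    (taylor c f).coeff n = f.coeff n + (n + 1) * c := by
  have h1 : ((hasseDeriv n) f).natDegree < 2 := by
    have := natDegree_hasseDeriv_le f n
    omega
  rw [taylor_coeff, eval_eq_sum_range' h1]
  have h2 : f.coeff (1 + n) = 1 := by
    rw [add_comm, ← hn]; exact hf
  simp [Finset.sum_range_succ, hasseDeriv_coeff, h2]
  rw [add_comm 1 n, Nat.choose_succ_self_right]
  push_cast
  ring

theorem monic_taylor {R : Type*} [CommRing R] [Nontrivial R] (f : R[X]) (hf : f.Monic) (c : R) :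
    (taylor c f).Monic := by
  rw [taylor_apply]
  exact hf.comp (monic_X_add_C c) (by simp)

/-- Induction step for an integral polynomial `G` of degree `n + 2` whose reduction modulo `u` has
vanishing subleading coefficient but is not `X ^ (n + 2)`: a root `c` of the reduction has
multiplicity strictly between `0` and `n + 2`, so after translating by `c`, Weierstrass preparation
yields a monic factor of smaller positive degree. -/
theorem hasRoot_of_integral (n : ℕ)
    (ih : ∀ m < n + 2, 0 < m → ∀ f : (LaurentSeries ℂ)[X], f.Monic → f.natDegree = m → HasRoot f)
    (G : (PowerSeries ℂ)[X]) (hG : G.Monic) (hn : G.natDegree = n + 2)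
    (h0 : PowerSeries.constantCoeff (G.coeff (n + 1)) = 0)
    (i : ℕ) (hi : i < n + 2) (hGi : PowerSeries.constantCoeff (G.coeff i) ≠ 0) :
    HasRoot (G.map (HahnSeries.ofPowerSeries ℤ ℂ)) := by
  set Gb : ℂ[X] := G.map PowerSeries.constantCoeff with hGb
  have hGbm : Gb.Monic := hG.map _
  have hGbn : Gb.natDegree = n + 2 := by rw [hGb, hG.natDegree_map, hn]
  obtain ⟨c, hc⟩ := IsAlgClosed.exists_root Gb (by
    rw [degree_eq_natDegree hGbm.ne_zero, hGbn]
    exact_mod_cast Nat.succ_ne_zero (n + 1))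
  have hTm : (taylor c Gb).Monic := monic_taylor _ hGbm c
  have hTn : (taylor c Gb).natDegree = n + 2 := by rw [natDegree_taylor, hGbn]
  set m := (taylor c Gb).natTrailingDegree with hm
  have hm0 : 0 < m := by
    rw [Nat.pos_iff_ne_zero, hm, Ne, natTrailingDegree_eq_zero, not_or, not_not]
    exact ⟨hTm.ne_zero, by rw [taylor_coeff_zero]; exact hc⟩
  have hlt : ∀ j < m, (taylor c Gb).coeff j = 0 := fun j hj =>
    coeff_eq_zero_of_lt_natTrailingDegree hj
  have hmn : m < n + 2 := by
    refine lt_of_le_of_ne (hTn ▸ natTrailingDegree_le_natDegree _) fun h => ?_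
    -- Were `c` a root of full multiplicity, the vanishing subleading coefficient would force
    -- `c = 0` and all lower coefficients of `Gb` to vanish.
    have h1 := taylor_coeff_pred Gb (n + 1) hGbm hGbn c
    rw [hlt _ (by omega), hGb, coeff_map, h0, zero_add, eq_comm, mul_eq_zero] at h1
    have hc0 : c = 0 := h1.resolve_left (by norm_cast)
    have h2 := hlt i (by omega)
    rw [hc0, taylor_zero, hGb, coeff_map] at h2
    exact hGi h2
  have hmap : (taylor (PowerSeries.C c) G).map PowerSeries.constantCoeff = taylor c Gb := by
    rw [map_taylor, PowerSeries.constantCoeff_C]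
  obtain ⟨g, hg, hgm, hgd⟩ := exists_monic_dvd (taylor (PowerSeries.C c) G) m
    (fun j hj => by rw [← coeff_map, hmap]; exact hlt j hj)
    (by
      rw [← coeff_map, hmap]
      exact mt trailingCoeff_eq_zero.1 hTm.ne_zero)
  have h3 := ih m hmn hm0 (g.map (HahnSeries.ofPowerSeries ℤ ℂ)) (hg.map _)
    (by rw [hg.natDegree_map, hgm])
  have h4 := h3.of_dvd (Polynomial.map_dvd (HahnSeries.ofPowerSeries ℤ ℂ) hgd)
  rw [map_taylor] at h4
  exact h4.of_taylor _

theorem exists_ofPowerSeries (x : LaurentSeries ℂ) (hx : ∀ m < 0, x.coeff m = 0) :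
    ∃ p : PowerSeries ℂ, HahnSeries.ofPowerSeries ℤ ℂ p = x := by
  refine ⟨PowerSeries.mk fun k => x.coeff k, ?_⟩
  ext m
  rcases lt_or_ge m 0 with h | h
  · rw [hx m h, PowerSeries.coeff_coe, if_pos h]
  · rw [PowerSeries.coeff_coe, if_neg h.not_gt, PowerSeries.coeff_mk, Int.natAbs_of_nonneg h]

/-- **Newton–Puiseux**: every monic polynomial of positive degree over `ℂ((u))` has a root in some
`ℂ((u ^ (1/r)))`. -/
theorem hasRoot (n : ℕ) : 0 < n → ∀ f : (LaurentSeries ℂ)[X], f.Monic → f.natDegree = n →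
    HasRoot f := by
  induction n using Nat.strong_induction_on with
  | _ n ih =>
  intro hn f hf hfn
  classical
  obtain ⟨n, rfl⟩ : ∃ k, n = k + 1 := ⟨n - 1, by omega⟩
  -- Kill the subleading coefficient by a translation.
  refine HasRoot.of_taylor (-f.coeff n / (n + 1)) ?_
  have : CharZero (LaurentSeries ℂ) :=
    charZero_of_injective_ringHom (HahnSeries.C_injective (Γ := ℤ) (R := ℂ))
  have hn1 : ((n : LaurentSeries ℂ) + 1) ≠ 0 := by exact_mod_cast Nat.succ_ne_zero n
  set F := taylor (-f.coeff n / (n + 1)) f with hF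
  have hFm : F.Monic := monic_taylor _ hf _
  have hFn : F.natDegree = n + 1 := by rw [hF, natDegree_taylor, hfn]
  have hF0 : F.coeff n = 0 := by
    rw [hF, taylor_coeff_pred f n hf hfn, mul_div_cancel₀ _ hn1, add_neg_cancel]
  clear_value F
  by_cases hz : F.coeff 0 = 0
  · refine ⟨1, one_pos, 0, ?_⟩
    rw [eval₂_at_zero, hz, map_zero]
  obtain ⟨n, rfl⟩ : ∃ k, n = k + 1 :=
    ⟨n - 1, by
      rcases Nat.eq_zero_or_pos n with rfl | h
      · exact absurd hF0 hz
      · omega⟩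
  -- The minimal slope of the Newton polygon, multiplied by `q` to make it integral.
  set q : ℕ := (n + 2).factorial with hq
  have hqpos : 0 < q := Nat.factorial_pos _
  have hdvd : ∀ i < n + 2, ((n + 2 - i : ℕ) : ℤ) ∣ q := fun i hi => by
    exact_mod_cast Nat.dvd_factorial (by omega) (by omega)
  obtain ⟨i₀, hi₀, hmin⟩ := Finset.exists_min_image
    ((Finset.range (n + 2)).filter fun i => F.coeff i ≠ 0)
    (fun i => (q : ℤ) / ((n + 2 - i : ℕ) : ℤ) * (F.coeff i).order)
    ⟨0, by simp [hz]⟩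
  set p : ℤ := (q : ℤ) / ((n + 2 - i₀ : ℕ) : ℤ) * (F.coeff i₀).order with hp
  simp only [Finset.mem_filter, Finset.mem_range] at hi₀ hmin
  have hle : ∀ i < n + 2, F.coeff i ≠ 0 →
      p * ((n + 2 - i : ℕ) : ℤ) ≤ q * (F.coeff i).order := fun i hi h => by
    obtain ⟨k, hk⟩ := hdvd i hi
    have hpos : (0 : ℤ) < ((n + 2 - i : ℕ) : ℤ) := by exact_mod_cast (by omega : 0 < n + 2 - i)
    have h1 := hmin i ⟨hi, h⟩
    rw [hk, Int.mul_ediv_cancel_left _ hpos.ne'] at h1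
    rw [hk]
    nlinarith
  have heq : p * ((n + 2 - i₀ : ℕ) : ℤ) = q * (F.coeff i₀).order := by
    rw [hp, mul_right_comm, Int.ediv_mul_cancel (hdvd i₀ hi₀.1)]
  -- Substituting `u ↦ u ^ q` and `X ↦ u ^ p X` makes all coefficients integral, with a unit in
  -- position `i₀`.
  refine HasRoot.of_map q hqpos (HasRoot.of_scaleRoots (HahnSeries.single (-p) 1)
    (HahnSeries.single_ne_zero one_ne_zero) ?_)
  set H := (F.map (ram q hqpos)).scaleRoots (HahnSeries.single (-p) 1) with hH
  have hHm : H.Monic := (monic_scaleRoots_iff _).2 (hFm.map _)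
  have hHn : H.natDegree = n + 2 := by rw [hH, natDegree_scaleRoots, hFm.natDegree_map, hFn]
  have hHc : ∀ i m, (H.coeff i).coeff m =
      (ram q hqpos (F.coeff i)).coeff (m + p * ((n + 2 - i : ℕ) : ℤ)) := fun i m => by
    rw [hH, coeff_scaleRoots, coeff_map, hFm.natDegree_map, hFn, HahnSeries.single_pow,
      one_pow, HahnSeries.coeff_mul_single, mul_one]
    congr 1
    simp
    ring
  have hint : H ∈ lifts (HahnSeries.ofPowerSeries ℤ ℂ) := by
    rw [lifts_iff_coeff_lifts]
    intro i
    refine exists_ofPowerSeries _ fun m hm => ?_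
    rcases lt_or_ge i (n + 2) with hi | hi
    · rw [hHc]
      by_cases h0 : F.coeff i = 0
      · simp [h0]
      by_cases hd : (q : ℤ) ∣ m + p * ((n + 2 - i : ℕ) : ℤ)
      · obtain ⟨k, hk⟩ := hd
        rw [hk, ram_coeff]
        by_contra hne
        have h1 := HahnSeries.order_le_of_coeff_ne_zero hne
        have h2 := hle i hi h0
        have h3 : (0 : ℤ) < q := by exact_mod_cast hqpos
        nlinarith
      · exact ram_coeff_eq_zero _ _ _ _ hd
    · rcases hi.eq_or_lt with rfl | hi
      · have : H.coeff (n + 2) = 1 := by rw [← hHn]; exact hHm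
        rw [this, HahnSeries.coeff_one, if_neg hm.ne]
      · rw [coeff_eq_zero_of_natDegree_lt (by omega)]
        rfl
  obtain ⟨G, hGH, hGn, hGm⟩ := lifts_and_natDegree_eq_and_monic hint hHm
  have hconst : ∀ i, PowerSeries.constantCoeff (G.coeff i) = (H.coeff i).coeff 0 := fun i => by
    rw [← hGH, coeff_map, ← PowerSeries.coeff_zero_eq_constantCoeff_apply,
      ← HahnSeries.ofPowerSeries_apply_coeff (Γ := ℤ)]
    rfl
  rw [← hGH]
  refine hasRoot_of_integral n (fun m hm => ih m hm) G hGm (hGn.trans hHn) ?_ i₀ hi₀.1 ?_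
  · rw [hconst, hHc, hF0, map_zero, HahnSeries.coeff_zero]
  · rw [hconst, hHc, zero_add, heq, ram_coeff]
    exact HahnSeries.coeff_order_eq_zero.not.2 hi₀.2

/-! ### The conjugates of a root -/

/-- Let `r` be minimal such that `f(u ^ r, X)` has a root `y` in `ℂ((u))`. Then the twists of `y`
by the `r`-th roots of unity are distinct and are exactly the roots of `f(u ^ r, X)`. -/
theorem map_ram_eq_prod (f : (LaurentSeries ℂ)[X]) (hf : f.Monic) (hirr : Irreducible f)
    (r : ℕ) (hr : 0 < r) (y : LaurentSeries ℂ) (hy : f.eval₂ (ram r hr) y = 0)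
    (hmin : ∀ (s : ℕ) (hs : 0 < s) (z : LaurentSeries ℂ), f.eval₂ (ram s hs) z = 0 → r ≤ s)
    (ξ : ℂ) (hξ : IsPrimitiveRoot ξ r) (hξ0 : ξ ≠ 0) :
    Function.Injective (fun j : Fin r => twist (ξ ^ (j : ℕ)) (pow_ne_zero _ hξ0) y) ∧
    f.map (ram r hr) = ∏ j : Fin r, (X - C (twist (ξ ^ (j : ℕ)) (pow_ne_zero _ hξ0) y)) := by
  have hinj : Function.Injective
      (fun j : Fin r => twist (ξ ^ (j : ℕ)) (pow_ne_zero _ hξ0) y) := by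
    -- If two twists agree, then `y` is a series in a proper power of `u`.
    have key : ∀ i j : Fin r, i < j → twist (ξ ^ (i : ℕ)) (pow_ne_zero _ hξ0) y ≠
        twist (ξ ^ (j : ℕ)) (pow_ne_zero _ hξ0) y := by
      intro i j hij h
      obtain ⟨e, he⟩ := Nat.exists_eq_add_of_lt hij
      have he' : (j : ℕ) = i + (e + 1) := by omega
      have hgpos : 0 < Nat.gcd r (e + 1) := Nat.gcd_pos_of_pos_left _ hr
      obtain ⟨a, ha⟩ := Nat.gcd_dvd_left r (e + 1)
      obtain ⟨b, hb⟩ := Nat.gcd_dvd_right r (e + 1)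
      have hapos : 0 < a := Nat.pos_of_ne_zero (by rintro rfl; omega)
      have hcop : Nat.Coprime a b := by
        have := Nat.coprime_div_gcd_div_gcd hgpos
        rwa [Nat.div_eq_of_eq_mul_right hgpos ha, Nat.div_eq_of_eq_mul_right hgpos hb] at this
      obtain ⟨z, hz⟩ := exists_ram_eq a hapos y (fun m hm => by
        have h1 := congrArg (fun x => HahnSeries.coeff x m) h
        simp only [twist_coeff] at h1
        have h2 := mul_right_cancel₀ hm h1
        rw [he', pow_add, mul_zpow, eq_comm,
          mul_eq_left₀ (zpow_ne_zero _ (pow_ne_zero _ hξ0)), ← zpow_natCast, ← zpow_mul,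
          hξ.zpow_eq_one_iff_dvd] at h2
        have h3 : ((Nat.gcd r (e + 1) : ℕ) : ℤ) * a ∣ (Nat.gcd r (e + 1) : ℕ) * (b * m) := by
          have ha' : ((Nat.gcd r (e + 1) : ℕ) : ℤ) * a = r := by exact_mod_cast ha.symm
          have hb' : ((Nat.gcd r (e + 1) : ℕ) : ℤ) * b = (e + 1 : ℕ) := by exact_mod_cast hb.symm
          rw [← mul_assoc, ha', hb']
          exact h2
        have h4 := (mul_dvd_mul_iff_left (by exact_mod_cast hgpos.ne')).1 h3
        exact (Nat.isCoprime_iff_coprime.2 hcop).dvd_of_dvd_mul_left h4)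
      have h5 := hmin _ hgpos z ?_
      · have h6 := Nat.le_of_dvd (Nat.succ_pos e) (Nat.gcd_dvd_right r (e + 1))
        have := j.2
        omega
      · have h7 : (ram a hapos) (f.eval₂ (ram _ hgpos) z) = 0 := by
          rw [hom_eval₂, hz, ← hy]
          congr 1
          ext1 x
          rw [RingHom.comp_apply, ram_ram]
          congr 1
          congr 1
          rw [mul_comm]; exact ha.symm
        exact (map_eq_zero _).1 h7
    intro i j h
    rcases lt_trichotomy i j with hij | hij | hij
    · exact absurd h (key i j hij)
    · exact hij
    · exact absurd h.symm (key j i hij)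
  refine ⟨hinj, ?_⟩
  set P := ∏ j : Fin r, (X - C (twist (ξ ^ (j : ℕ)) (pow_ne_zero _ hξ0) y)) with hP
  have hPm : P.Monic := monic_prod_of_monic _ _ fun j _ => monic_X_sub_C _
  have hPdeg : P.natDegree = r := by
    rw [hP, natDegree_prod_of_monic _ _ fun j _ => monic_X_sub_C _]
    simp
  -- The twist by `ξ` permutes the factors of `P` cyclically.
  have hPfix : P.map (twist ξ hξ0) = P := by
    have hrng : P = ∏ j ∈ Finset.range r, (X - C (twist (ξ ^ j) (pow_ne_zero _ hξ0) y)) :=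
      Fin.prod_univ_eq_prod_range (fun j => X - C (twist (ξ ^ j) (pow_ne_zero _ hξ0) y)) r
    have htw : ∀ j, twist ξ hξ0 (twist (ξ ^ j) (pow_ne_zero _ hξ0) y) =
        twist (ξ ^ (j + 1)) (pow_ne_zero _ hξ0) y := fun j => by
      ext m
      simp only [twist_coeff]
      rw [pow_succ', mul_zpow, mul_assoc]
    have hlast : twist (ξ ^ r) (pow_ne_zero _ hξ0) y = twist (ξ ^ 0) (pow_ne_zero _ hξ0) y := by
      ext m
      simp only [twist_coeff]
      rw [hξ.pow_eq_one, pow_zero]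
    rw [hrng, Polynomial.map_prod]
    simp only [Polynomial.map_sub, map_X, map_C, htw]
    obtain ⟨k, rfl⟩ : ∃ k, r = k + 1 := ⟨r - 1, by omega⟩
    rw [Finset.prod_range_succ, hlast, ← Finset.prod_range_succ'
      (fun j => X - C (twist (ξ ^ j) (pow_ne_zero _ hξ0) y))]
  -- A series fixed by the twist by `ξ` is a series in `u ^ r`, so `P` descends to some `Q`.
  have hPlift : P ∈ lifts (ram r hr) := by
    rw [lifts_iff_coeff_lifts]
    intro i
    refine exists_ram_eq r hr _ fun m hm => ?_
    have h1 := congrArg (fun p => (p.coeff i).coeff m) hPfix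
    simp only [coeff_map, twist_coeff] at h1
    rw [mul_eq_right₀ hm, hξ.zpow_eq_one_iff_dvd] at h1
    exact h1
  obtain ⟨Q, hQP, hQn, hQm⟩ := lifts_and_natDegree_eq_and_monic hPlift hPm
  have hPdvd : P ∣ f.map (ram r hr) := by
    refine Finset.prod_dvd_of_coprime ((pairwise_coprime_X_sub_C hinj).set_pairwise _) ?_
    intro j _
    rw [dvd_iff_isRoot, IsRoot.def, eval_map]
    have h1 : twist (ξ ^ (j : ℕ)) (pow_ne_zero _ hξ0) (f.eval₂ (ram r hr) y) = 0 := by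
      rw [hy, map_zero]
    rw [hom_eval₂] at h1
    rw [← h1]
    congr 1
    ext1 x
    refine (twist_ram r hr _ (pow_ne_zero _ hξ0) ?_ x).symm
    rw [← pow_mul, mul_comm, pow_mul, hξ.pow_eq_one, one_pow]
  have hQf : Q ∣ f := by
    rw [← hQP] at hPdvd
    exact (map_dvd_map' _).1 hPdvd
  have hQu : ¬ IsUnit Q := fun h => by
    have := natDegree_eq_zero_of_isUnit h
    omega
  have hass : Associated Q f := (hirr.dvd_iff.1 hQf).resolve_left hQu |>.symm
  rw [← eq_of_monic_of_associated hQm hf hass, hQP]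

end NewtonPuiseux

/-- Newton–Puiseux factorization (Theorem `puiseux-thm`): a monic irreducible polynomial `f`
of degree `d ≥ 1` over `ℂ((u))` factors over the Puiseux series field as
`∏ⱼ (X - φⱼ)` where `φ₀, …, φ_{d-1}` are the (pairwise distinct) conjugates of a single
Puiseux series with support in `(1/d)ℤ`, conjugation being given by a primitive `d`-th
root of unity `ζ`. -/
theorem newton_puiseux_factorization (f : Polynomial (LaurentSeries ℂ)) (d : ℕ) (hd : 1 ≤ d)
    (hmonic : f.Monic) (hdeg : f.natDegree = d) (hirr : Irreducible f)
    (ζ : ℂ) (hζ : IsPrimitiveRoot ζ d) :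
    ∃ φ : Fin d → HahnSeries ℚ ℂ,
      Function.Injective φ ∧
      (∀ j, SuppInDiv d (φ j)) ∧
      (∀ (j : Fin d) (m : ℤ),
        (φ j).coeff ((m : ℚ) / d) = ζ ^ ((j.1 : ℤ) * m) * (φ ⟨0, hd⟩).coeff ((m : ℚ) / d)) ∧
      f.map iota = ∏ j : Fin d, (Polynomial.X - Polynomial.C (φ j)) := by
  classical
  open NewtonPuiseux in
  have hex : ∃ r : ℕ, ∃ (hr : 0 < r) (y : LaurentSeries ℂ), f.eval₂ (ram r hr) y = 0 :=
    hasRoot d hd f hmonic hdeg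
  open NewtonPuiseux in
  obtain ⟨r, ⟨hr, y, hy⟩, hmin⟩ : ∃ r : ℕ,
      (∃ (hr : 0 < r) (y : LaurentSeries ℂ), f.eval₂ (ram r hr) y = 0) ∧
      ∀ s, (∃ (hs : 0 < s) (y : LaurentSeries ℂ), f.eval₂ (ram s hs) y = 0) → r ≤ s :=
    ⟨Nat.find hex, Nat.find_spec hex, fun s hs => Nat.find_min' hex hs⟩
  have hmain := fun ξ hξ hξ0 => NewtonPuiseux.map_ram_eq_prod f hmonic hirr r hr y hy
    (fun s hs z hz => hmin s ⟨hs, z, hz⟩) ξ hξ hξ0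
  -- Some primitive `r`-th root of unity shows `r = d`; then the given `ζ` can be used.
  obtain rfl : r = d := by
    have hξ := Complex.isPrimitiveRoot_exp r hr.ne'
    have h1 := congrArg Polynomial.natDegree (hmain _ hξ (Complex.exp_ne_zero _)).2
    rw [hmonic.natDegree_map, hdeg, Polynomial.natDegree_prod_of_monic _ _
      fun j _ => Polynomial.monic_X_sub_C _] at h1
    simpa using h1.symm
  have hζ0 : ζ ≠ 0 := hζ.ne_zero hr.ne'
  obtain ⟨hinj, hprod⟩ := hmain ζ hζ hζ0
  refine ⟨fun j => NewtonPuiseux.rootEmb r hr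
    (NewtonPuiseux.twist (ζ ^ (j : ℕ)) (pow_ne_zero _ hζ0) y),
    (NewtonPuiseux.rootEmb r hr).injective.comp hinj,
    fun j => NewtonPuiseux.suppInDiv_rootEmb _ _ _, fun j m => ?_, ?_⟩
  · simp only [NewtonPuiseux.rootEmb_coeff, NewtonPuiseux.twist_coeff]
    rw [pow_zero, one_zpow, one_mul, zpow_mul, zpow_natCast]
  · rw [← NewtonPuiseux.rootEmb_comp_ram r hr, ← Polynomial.map_map, hprod, Polynomial.map_prod]
    simp
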